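/- Let α ∈ [0,1] be irrational and let 0 < δ ≤ ∞. Then for every s with 0 < s ≤ 1, the ω_s-Hausdorff measure of the exact resonance level set D(δ) is infinite: ℋ^{ω_s}(D(δ)) = ∞. -/

import Mathlib

open Filter MeasureTheory Set
open scoped ENNReal NNReal Classical

/-- Distance from `x : ℝ` to the nearest integer, i.e. `‖x‖_{ℝ/ℤ}`. -/
noncomputable def distZ (x : ℝ) : ℝ := |x - round x|

/-- The `ω`-Hausdorff measure of a set `S ⊆ ℝ`: the limit as `ε → 0⁺` (equivalently the
supremum over `ε > 0`, by monotonicity) of the infimum of `∑ᵢ ω (bᵢ - aᵢ)` over countable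
covers of `S` by intervals `(aᵢ, bᵢ)` of length at most `ε`. -/
noncomputable def gaugeHaus (ω : ℝ → ℝ) (S : Set ℝ) : ℝ≥0∞ :=
  ⨆ (ε : ℝ) (_ : 0 < ε),
    ⨅ (a : ℕ → ℝ) (b : ℕ → ℝ) (_ : S ⊆ ⋃ i, Set.Ioo (a i) (b i))
      (_ : ∀ i, a i ≤ b i ∧ b i - a i ≤ ε),
      ∑' i, ENNReal.ofReal (ω (b i - a i))

/-- The gauge function `ω_s(r) = (-log r)^{-s}` for `0 < r < 1`, and `ω_s(0) = 0`. -/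
noncomputable def omegaS (s : ℝ) (r : ℝ) : ℝ := if 0 < r then (-Real.log r) ^ (-s) else 0

/-- The resonance strength `δ(α, x) = limsup_{|k| → ∞} (-log ‖x - kα‖_{ℝ/ℤ}) / |k|`,
with the convention that it is `∞` when `x ≡ kα (mod ℤ)` for some `k ∈ ℤ`. -/

noncomputable def resStrength (α x : ℝ) : ℝ≥0∞ :=
  if ∃ k m : ℤ, x = (k : ℝ) * α + (m : ℝ) then ⊤
  else Filter.limsup
    (fun k : ℤ => ENNReal.ofReal (-Real.log (distZ (x - (k : ℝ) * α)) / |(k : ℝ)|))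
    Filter.cofinite

/-- The exact resonance level set `D(δ) = {x ∈ [0,1] : δ(α,x) = δ}`. -/
noncomputable def resSet (α : ℝ) (δ : ℝ≥0∞) : Set ℝ :=
  {x ∈ Set.Icc (0 : ℝ) 1 | resStrength α x = δ}

/-!
Given a cover of small `ω₁`-cost, we build nested arcs centred at multiples `kₙ • α`, with radii
`exp (-δₙ * |kₙ|)`, whose common point is resonant to the right order and lies in no member of the
cover. Each arc also keeps clear of the multiples `j • α` with `|j|` below the next centre, which
bounds the strength of the resonance from above.

Let `q` be a large denominator with `α` very close to a fraction `p / q`. Inside an arc of radius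
`ρ`, about `ρ * q` of the multiples `k • α` with `|k| ≤ q / 2` are available, and they are spaced by
about `1 / q`. Only finitely many members of the cover are long, and these block few multiples; a
short one meets at most one of the small arcs around the others. Averaging its cost, some `k` has an
arc meeting cover members of total `ω₁`-cost at most `1 / (2 * δ * |k|)`. Since
`ω₁ r = 1 / log (1 / r)`, each such member is shorter than `exp (-2 * δ * |k|)`, the square of the
radius, so in the next arc the construction can be repeated and no member survives in the limit.
-/

open scoped Topology

/-! ### The circle -/

section Circle

lemma distZ_sub_mul_eq_dist (α x : ℝ) (k : ℤ) :
    distZ (x - k * α) = dist (x : UnitAddCircle) (k • (α : UnitAddCircle)) := by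
  rw [dist_eq_norm, ← AddCircle.coe_zsmul, ← AddCircle.coe_sub, UnitAddCircle.norm_eq, distZ,
    zsmul_eq_mul]

lemma dist_coe_le_abs_sub (x y : ℝ) : dist (x : UnitAddCircle) y ≤ |x - y| := by
  rw [dist_eq_norm, ← AddCircle.coe_sub, UnitAddCircle.norm_eq]
  simpa using round_le (x - y) 0

lemma dist_add_half_le (x y : UnitAddCircle) :
    dist x (y + ((1 / 2 : ℝ) : UnitAddCircle)) ≤ 1 / 2 - dist x y := by
  obtain ⟨t, rfl⟩ := QuotientAddGroup.mk_surjective x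
  obtain ⟨u, rfl⟩ := QuotientAddGroup.mk_surjective y
  have hr := abs_le.mp (abs_sub_round (t - u))
  change dist (t : UnitAddCircle) ((u : UnitAddCircle) + ((1 / 2 : ℝ) : UnitAddCircle)) ≤
    1 / 2 - dist (t : UnitAddCircle) (u : UnitAddCircle)
  rw [dist_eq_norm, dist_eq_norm, ← AddCircle.coe_add, ← AddCircle.coe_sub, ← AddCircle.coe_sub,
    UnitAddCircle.norm_eq, UnitAddCircle.norm_eq]
  rcases le_total 0 (t - u - round (t - u)) with h | h
  · refine (round_le _ (round (t - u))).trans (le_of_eq ?_)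
    rw [abs_of_nonneg h, abs_of_nonpos (by linarith)]
    ring
  · refine (round_le _ (round (t - u) - 1)).trans (le_of_eq ?_)
    push_cast
    rw [abs_of_nonpos h, abs_of_nonneg (by linarith)]
    ring

lemma dist_zsmul_zsmul_le {E : Type*} [SeminormedAddCommGroup E] (k : ℤ) (x y : E) :
    dist (k • x) (k • y) ≤ |(k : ℝ)| * dist x y := by
  rw [dist_eq_norm, dist_eq_norm, ← smul_sub, ← Int.norm_eq_abs]
  exact norm_zsmul_le _ _

lemma card_mul_le_of_separated {κ : Type*} {T : Finset κ} {p : κ → UnitAddCircle}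
    {z : UnitAddCircle} {s w : ℝ} (hs0 : 0 ≤ s) (hs1 : s ≤ 1) (hw : 0 ≤ w)
    (hsep : (T : Set κ).Pairwise fun i j => s ≤ dist (p i) (p j))
    (hT : ∀ i ∈ T, dist (p i) z ≤ w) : T.card * s ≤ 2 * w + s := by
  have hvol (x : UnitAddCircle) : volume.real (Metric.ball x (s / 2)) = s := by
    rw [measureReal_congr AddCircle.closedBall_ae_eq_ball.symm, measureReal_def,
      AddCircle.volume_closedBall, mul_div_cancel₀ _ two_ne_zero, min_eq_right hs1,
      ENNReal.toReal_ofReal hs0]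
  have hunion : volume.real (⋃ i ∈ T, Metric.ball (p i) (s / 2)) = T.card * s := by
    rw [measureReal_biUnion_finset (fun i hi j hj hij => Metric.ball_disjoint_ball ?_)
      fun i _ => measurableSet_ball]
    · simp only [hvol, Finset.sum_const, nsmul_eq_mul]
    · linarith [hsep hi hj hij]
  rw [← hunion]
  refine (measureReal_mono (s₂ := Metric.closedBall z (w + s / 2))
    (iUnion₂_subset fun i hi => Metric.ball_subset_closedBall.trans
      (Metric.closedBall_subset_closedBall' (by linarith [hT i hi])))
    (measure_ne_top _ _)).trans ?_
  rw [measureReal_def, AddCircle.volume_closedBall]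
  refine ENNReal.toReal_le_of_le_ofReal (by positivity) (ENNReal.ofReal_le_ofReal ?_)
  exact (min_le_right _ _).trans (by linarith)

end Circle

/-! ### Approximation denominators -/

/-- `q` is an approximation denominator of `θ` if some point of exact order `q` lies within
`1 / q ^ 2` of `θ`; by Dirichlet's theorem there are arbitrarily large ones as soon as `θ` is the
class of an irrational number. -/
def IsApproxDen (θ : UnitAddCircle) (q : ℕ) : Prop :=
  0 < q ∧ ∃ u : UnitAddCircle, addOrderOf u = q ∧ dist θ u ≤ 1 / (q : ℝ) ^ 2

lemma zsmul_coe_ne_zero {α : ℝ} (hα : Irrational α) {k : ℤ} (hk : k ≠ 0) :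
    k • (α : UnitAddCircle) ≠ 0 := by
  rw [← AddCircle.coe_zsmul, Ne, AddCircle.coe_eq_zero_iff]
  rintro ⟨m, hm⟩
  refine (hα.intCast_mul hk).ne_int m ?_
  simpa using hm.symm

lemma frequently_isApproxDen {α : ℝ} (hα : Irrational α) :
    ∃ᶠ q in atTop, IsApproxDen (α : UnitAddCircle) q := by
  rw [frequently_atTop]
  intro Q
  obtain ⟨n, hn0, hn⟩ : ∃ n : ℕ, 0 < n ∧
      ∀ k ∈ Finset.Ioo 0 Q, 1 / ((n : ℝ) + 1) < ‖(k : ℤ) • (α : UnitAddCircle)‖ := by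
    refine ((eventually_gt_atTop 0).and ((Finset.eventually_all _).mpr fun k hk => ?_)).exists
    have hk0 : (k : ℤ) ≠ 0 := mod_cast (Finset.mem_Ioo.mp hk).1.ne'
    exact tendsto_one_div_add_atTop_nhds_zero_nat.eventually_lt_const
      (norm_pos_iff.mpr (zsmul_coe_ne_zero hα hk0))
  obtain ⟨r, hr, hrn⟩ := Real.exists_rat_abs_sub_le_and_den_le α hn0
  have hrn' : (r.den : ℝ) ≤ n + 1 := mod_cast hrn.trans n.le_succ
  have hord : addOrderOf ((r : ℝ) : UnitAddCircle) = r.den := by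
    simpa only [mul_one] using AddCircle.addOrderOf_coe_rat (p := (1 : ℝ)) (q := r)
  have hdist := (dist_coe_le_abs_sub α r).trans hr
  refine ⟨r.den, ?_, r.den_pos, (r : ℝ), hord, hdist.trans ?_⟩
  · by_contra! hlt
    refine (hn r.den (Finset.mem_Ioo.mpr ⟨r.den_pos, hlt⟩)).not_ge ?_
    calc ‖(r.den : ℤ) • (α : UnitAddCircle)‖
        = ‖r.den • ((α : UnitAddCircle) - (r : ℝ))‖ := by
          rw [smul_sub, ← hord, addOrderOf_nsmul_eq_zero, sub_zero, natCast_zsmul]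
      _ ≤ r.den * (1 / ((n + 1) * r.den)) := by
          refine (norm_nsmul_le).trans ?_
          rw [← dist_eq_norm]
          gcongr
      _ = 1 / ((n : ℝ) + 1) := by field_simp
  · rw [sq]
    gcongr

/-- A quarter of the guaranteed separation of the points `k • θ`, `0 ≤ k < q`, when `q` is an
approximation denominator of `θ`. -/
noncomputable def quarterGap (q : ℕ) : ℝ := 1 / (4 * (q : ℝ) ^ 2)

/-- A block of `q` consecutive integers centred at `0`. -/
noncomputable def centeredRange (q : ℕ) : Finset ℤ := Finset.Ico (-(q / 2 : ℤ)) (q - q / 2)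

lemma card_centeredRange (q : ℕ) : (centeredRange q).card = q := by
  simp [centeredRange]

lemma two_mul_abs_le_of_mem_centeredRange {q : ℕ} {k : ℤ} (hk : k ∈ centeredRange q) :
    2 * |(k : ℝ)| ≤ q := by
  have : 2 * |k| ≤ q := by
    rw [centeredRange, Finset.mem_Ico] at hk
    rcases abs_cases k with h | h <;> omega
  exact_mod_cast this

lemma abs_sub_lt_of_mem_centeredRange {q : ℕ} {k l : ℤ} (hk : k ∈ centeredRange q)
    (hl : l ∈ centeredRange q) : |k - l| < q := by
  rw [centeredRange, Finset.mem_Ico] at hk hl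
  rw [abs_lt]
  omega

lemma quarterGap_pos {q : ℕ} (hq : 0 < q) : 0 < quarterGap q := by
  unfold quarterGap
  positivity

lemma tendsto_quarterGap : Tendsto quarterGap atTop (𝓝 0) := by
  have h : Tendsto (fun q : ℕ => 4 * (q : ℝ) ^ 2) atTop atTop :=
    ((tendsto_pow_atTop two_ne_zero).comp tendsto_natCast_atTop_atTop).const_mul_atTop four_pos
  exact (tendsto_inv_atTop_zero.comp h).congr fun q => (one_div _).symm

lemma inv_le_norm_zsmul {u : UnitAddCircle} {m : ℤ} (hu : 0 < addOrderOf u) (hm : m ≠ 0)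
    (hmu : |m| < addOrderOf u) : 1 / (addOrderOf u : ℝ) ≤ ‖m • u‖ := by
  have hne : m • u ≠ 0 := fun h =>
    hmu.not_ge (Int.le_of_dvd (abs_pos.mpr hm)
      ((dvd_abs _ _).mpr (addOrderOf_dvd_iff_zsmul_eq_zero.mpr h)))
  have hfin : IsOfFinAddOrder (m • u) := (addOrderOf_pos_iff.mp hu).zsmul
  have hle : addOrderOf (m • u) ≤ addOrderOf u :=
    Nat.le_of_dvd hu (addOrderOf_dvd_of_mem_zmultiples ⟨m, rfl⟩)
  have h := AddCircle.le_add_order_smul_norm_of_isOfFinAddOrder hfin hne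
  rw [nsmul_eq_mul] at h
  rw [div_le_iff₀' (mod_cast hu)]
  exact h.trans (by gcongr)

namespace IsApproxDen

variable {θ : UnitAddCircle} {q : ℕ}

lemma four_mul_quarterGap_le_norm_zsmul (h : IsApproxDen θ q) {m : ℤ} (hm : m ≠ 0)
    (hmq : |m| < q) : 4 * quarterGap q ≤ ‖m • θ‖ := by
  obtain ⟨hq, u, rfl, hu⟩ := h
  set q := addOrderOf u
  have hmq' : |(m : ℝ)| ≤ q - 1 := by
    rw [le_sub_iff_add_le]
    exact_mod_cast hmq
  have hle : ‖m • u‖ ≤ ‖m • θ‖ + |(m : ℝ)| * dist θ u := by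
    have htri := norm_sub_norm_le (m • u) (m • θ)
    rw [← dist_eq_norm, dist_comm] at htri
    linarith [dist_zsmul_zsmul_le m θ u]
  calc 4 * quarterGap q = 1 / q - (q - 1) * (1 / (q : ℝ) ^ 2) := by
        unfold quarterGap
        field_simp
        ring
    _ ≤ 1 / q - |(m : ℝ)| * dist θ u := by gcongr; exact (abs_nonneg _).trans hmq'
    _ ≤ ‖m • θ‖ := by linarith [inv_le_norm_zsmul hq hm hmq]

lemma four_mul_quarterGap_le_dist (h : IsApproxDen θ q) {k l : ℤ} (hkl : k ≠ l)
    (hq : |k - l| < q) : 4 * quarterGap q ≤ dist (k • θ) (l • θ) := by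
  rw [dist_eq_norm, ← sub_smul]
  exact h.four_mul_quarterGap_le_norm_zsmul (sub_ne_zero.mpr hkl) hq

lemma card_dist_le_le (h : IsApproxDen θ q) (z : UnitAddCircle) {w : ℝ} (hw : 0 ≤ w) :
    (((centeredRange q).filter fun k => dist (k • θ) z ≤ w).card : ℝ) ≤ 2 * q * w + 2 := by
  obtain ⟨hq, u, hqu, hu⟩ := h
  have hq' : (1 : ℝ) ≤ q := mod_cast hq
  have key := card_mul_le_of_separated (T := (centeredRange q).filter fun k => dist (k • θ) z ≤ w)
    (p := fun k => k • u) (z := z) (s := 1 / q) (w := w + 1 / (2 * q)) (by positivity)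
    ((div_le_one (by positivity)).mpr hq') (by positivity) ?_ ?_
  · have h2 : 2 * (w + 1 / (2 * (q : ℝ))) + 1 / q = (2 * q * w + 2) * (1 / q) := by field_simp; ring
    rw [h2] at key
    exact le_of_mul_le_mul_right key (by positivity)
  · intro k hk l hl hkl
    rw [Finset.mem_coe, Finset.mem_filter] at hk hl
    rw [dist_eq_norm, ← sub_smul, ← hqu]
    refine inv_le_norm_zsmul (hqu ▸ hq) (sub_ne_zero.mpr hkl) ?_
    rw [hqu]
    exact abs_sub_lt_of_mem_centeredRange hk.1 hl.1
  · intro k hk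
    rw [Finset.mem_filter] at hk
    have hk2 : |(k : ℝ)| ≤ q / 2 := by linarith [two_mul_abs_le_of_mem_centeredRange hk.1]
    calc dist (k • u) z ≤ dist (k • θ) z + dist (k • θ) (k • u) := by
          linarith [dist_triangle_left (k • u) z (k • θ)]
      _ ≤ w + q / 2 * (1 / (q : ℝ) ^ 2) := by
          refine add_le_add hk.2 ((dist_zsmul_zsmul_le k θ u).trans ?_)
          gcongr
      _ = w + 1 / (2 * q) := by field_simp

lemma le_card_dist_le (h : IsApproxDen θ q) (z : UnitAddCircle) {w : ℝ} (hw : w ≤ 1 / 2) :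
    2 * q * w - 2 ≤ (((centeredRange q).filter fun k => dist (k • θ) z ≤ w).card : ℝ) := by
  have hcompl := h.card_dist_le_le (z + ((1 / 2 : ℝ) : UnitAddCircle))
    (sub_nonneg.mpr hw)
  have hle : ((centeredRange q).filter fun k => ¬ dist (k • θ) z ≤ w).card ≤
      ((centeredRange q).filter fun k =>
        dist (k • θ) (z + ((1 / 2 : ℝ) : UnitAddCircle)) ≤ 1 / 2 - w).card := by
    refine Finset.card_le_card (Finset.monotone_filter_right _ fun k _ hk => ?_)
    linarith [dist_add_half_le (k • θ) z]
  have hsum := Finset.card_filter_add_card_filter_not (s := centeredRange q)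
    (fun k => dist (k • θ) z ≤ w)
  rw [card_centeredRange] at hsum
  rify at hle hsum
  linarith

end IsApproxDen

/-! ### Obstacles -/

/-- The indices of the arcs `closedBall (z i) (w i)` that meet `closedBall c r`. -/
def meeting {ι : Type*} (z : ι → UnitAddCircle) (w : ι → ℝ) (c : UnitAddCircle) (r : ℝ) : Set ι :=
  {i | dist c (z i) ≤ w i + r}

/-- At scale `t`, the point `c` is only obstructed by short arcs: every arc
`closedBall (z i) (w i)` that meets `closedBall c t` has radius less than `t`. -/
def Unblocked {ι : Type*} (z : ι → UnitAddCircle) (w : ι → ℝ) (t : ℝ) (c : UnitAddCircle) : Prop :=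
  ∀ i ∈ meeting z w c t, w i < t

section Obstacles

variable {ι : Type*} {z : ι → UnitAddCircle} {w f : ι → ℝ} {θ c c' : UnitAddCircle} {r r' : ℝ}

lemma tsum_subtype_mono (hf : Summable f) (hf0 : ∀ i, 0 ≤ f i) {s t : Set ι} (hst : s ⊆ t) :
    ∑' i : s, f i ≤ ∑' i : t, f i := by
  rw [tsum_subtype, tsum_subtype]
  exact (hf.indicator s).tsum_le_tsum (indicator_le_indicator_of_subset hst hf0) (hf.indicator t)

lemma summable_of_summable_sqrt (hw : ∀ i, 0 ≤ w i) (hs : Summable fun i => √(w i)) :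
    Summable w := by
  refine hs.of_norm_bounded_eventually ?_
  filter_upwards [hs.tendsto_cofinite_zero.eventually_le_const one_pos] with i hi
  rw [Real.norm_of_nonneg (hw i)]
  calc w i = √(w i) * √(w i) := (Real.mul_self_sqrt (hw i)).symm
    _ ≤ √(w i) := mul_le_of_le_one_left (Real.sqrt_nonneg _) hi

lemma meeting_subset_meeting (h : dist c c' + r ≤ r') : meeting z w c r ⊆ meeting z w c' r' := by
  intro i (hi : dist c (z i) ≤ w i + r)
  change dist c' (z i) ≤ w i + r'
  linarith [dist_triangle_left c' (z i) c]

lemma finite_setOf_le (hs : Summable w) {t : ℝ} (ht : 0 < t) : {i | t ≤ w i}.Finite := by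
  simpa only [eventually_cofinite, not_lt] using
    hs.tendsto_cofinite_zero.eventually_lt_const ht

lemma tendsto_ncard_quarterGap_le_div (hs : Summable fun i => √(w i)) :
    Tendsto (fun q : ℕ => {i | quarterGap q ≤ w i}.ncard / (q : ℝ)) atTop (𝓝 0) := by
  have hcard (q : ℕ) : ∑' i, {i | quarterGap q ≤ w i}.indicator (fun _ => 1 / (q : ℝ)) i =
      {i | quarterGap q ≤ w i}.ncard / (q : ℝ) := by
    rw [← tsum_subtype _ fun _ => 1 / (q : ℝ), tsum_const, Nat.card_coe_set_eq, nsmul_eq_mul,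
      mul_one_div]
  simp_rw [← hcard]
  rw [← tsum_zero (β := ι)]
  refine tendsto_tsum_of_dominated_convergence (hs.mul_left 2) (fun i => ?_) ?_
  · refine squeeze_zero (fun q => indicator_nonneg (fun _ _ => by positivity) _)
      (fun q => indicator_le_self' (fun _ _ => by positivity) _)
      tendsto_one_div_atTop_nhds_zero_nat
  · filter_upwards [eventually_gt_atTop 0] with q hq i
    rw [Real.norm_of_nonneg (indicator_nonneg (fun _ _ => by positivity) _)]
    refine indicator_le' (g := fun i => 2 * √(w i)) (fun i hi => ?_) (fun _ _ => by positivity) i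
    have hsqrt : 1 / (2 * (q : ℝ)) ≤ √(w i) := by
      refine Real.le_sqrt_of_sq_le (le_of_eq_of_le ?_ hi)
      rw [quarterGap]
      ring
    calc 1 / (q : ℝ) = 2 * (1 / (2 * q)) := by field_simp
      _ ≤ 2 * √(w i) := by gcongr

lemma IsApproxDen.card_not_unblocked_le {q : ℕ} (h : IsApproxDen θ q) (hw : ∀ i, 0 ≤ w i)
    (hs : Summable w) :
    (((centeredRange q).filter fun k => ¬ Unblocked z w (quarterGap q) (k • θ)).card : ℝ) ≤
      2 * q * ∑' i, w i + 3 * {i | quarterGap q ≤ w i}.ncard := by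
  set τ := quarterGap q
  have hτ : 0 < τ := quarterGap_pos h.1
  have hfin : {i | τ ≤ w i}.Finite := finite_setOf_le hs hτ
  have hqτ : 2 * q * τ ≤ 1 := by
    have : (1 : ℝ) ≤ q := mod_cast h.1
    rw [show 2 * q * τ = 1 / (2 * q) by simp only [τ, quarterGap]; field_simp; norm_num]
    rw [div_le_one (by positivity)]
    linarith
  have hsub : ((centeredRange q).filter fun k => ¬ Unblocked z w τ (k • θ)) ⊆
      hfin.toFinset.biUnion fun i =>
        (centeredRange q).filter fun k => dist (k • θ) (z i) ≤ w i + τ := by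
    intro k hk
    simp only [Finset.mem_filter, Unblocked, not_forall, not_lt] at hk
    obtain ⟨hkq, i, hi, hτi⟩ := hk
    exact Finset.mem_biUnion.mpr
      ⟨i, hfin.mem_toFinset.mpr hτi, Finset.mem_filter.mpr ⟨hkq, hi⟩⟩
  have hcount := (Finset.card_le_card hsub).trans Finset.card_biUnion_le
  calc _ ≤ ∑ i ∈ hfin.toFinset,
        (((centeredRange q).filter fun k => dist (k • θ) (z i) ≤ w i + τ).card : ℝ) :=
        mod_cast hcount
    _ ≤ ∑ i ∈ hfin.toFinset, (2 * q * w i + 3) := by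
        refine Finset.sum_le_sum fun i _ => ?_
        linarith [h.card_dist_le_le (z i) (add_nonneg (hw i) hτ.le)]
    _ = 2 * q * ∑ i ∈ hfin.toFinset, w i + 3 * {i | τ ≤ w i}.ncard := by
        rw [Finset.sum_add_distrib, ← Finset.mul_sum, Finset.sum_const, nsmul_eq_mul,
          Set.ncard_eq_toFinset_card _ hfin, mul_comm (3 : ℝ)]
    _ ≤ _ := by
        gcongr
        exact hs.sum_le_tsum _ fun i _ => hw i

lemma eventually_card_not_unblocked_le (z : ι → UnitAddCircle) (θ : UnitAddCircle)
    (hw : ∀ i, 0 ≤ w i) (hs : Summable fun i => √(w i)) {B : ℝ} (hB : 2 * ∑' i, w i < B) :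
    ∀ᶠ q : ℕ in atTop, IsApproxDen θ q →
      (((centeredRange q).filter fun k => ¬ Unblocked z w (quarterGap q) (k • θ)).card : ℝ) ≤
        B * q := by
  filter_upwards [(tendsto_ncard_quarterGap_le_div hs).eventually_le_const
    (div_pos (sub_pos.mpr hB) three_pos)] with q hq h
  rw [div_le_iff₀ (mod_cast h.1)] at hq
  linarith [h.card_not_unblocked_le (z := z) hw (summable_of_summable_sqrt hw hs)]

lemma tendsto_tsum_lt_nhds_zero (hw : ∀ i, 0 ≤ w i) (hf : Summable f)
    (hwf : ∀ i, w i = 0 → f i = 0) :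
    Tendsto (fun t => ∑' i : {i | w i < t}, f i) (𝓝 0) (𝓝 0) := by
  simp_rw [fun t : ℝ => tsum_subtype {i | w i < t} f]
  suffices Tendsto (fun t => ∑' i, {i | w i < t}.indicator f i) (𝓝 0) (𝓝 (∑' _ : ι, (0 : ℝ))) by
    rwa [tsum_zero] at this
  refine tendsto_tsum_of_dominated_convergence hf.norm (fun i => ?_)
    (Eventually.of_forall fun t i => norm_indicator_le_norm_self _ _)
  rcases (hw i).eq_or_lt with h | h
  · simp only [indicator_apply, hwf i h.symm, ite_self, tendsto_const_nhds]
  · refine tendsto_const_nhds.congr' ?_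
    filter_upwards [eventually_le_nhds h] with t ht
    exact (indicator_of_notMem (s := {i | w i < t}) (not_lt.mpr ht) f).symm

/-- Distinct points `k • θ` are so far apart that an arc shorter than `quarterGap q` meets at most
one of the arcs around them. -/
lemma IsApproxDen.sum_tsum_meeting_le {q : ℕ} (h : IsApproxDen θ q) (hf : Summable f)
    (hf0 : ∀ i, 0 ≤ f i) {G : Finset ℤ} (hG : G ⊆ centeredRange q)
    (hGw : ∀ k ∈ G, Unblocked z w (quarterGap q) (k • θ)) :
    ∑ k ∈ G, ∑' i : meeting z w (k • θ) (quarterGap q), f i ≤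
      ∑' i : {i | w i < quarterGap q}, f i := by
  rw [← Summable.tsum_finset_bUnion_disjoint (fun k hk l hl hkl => ?_)
    fun k _ => hf.subtype _]
  · exact tsum_subtype_mono hf hf0 (iUnion₂_subset fun k hk => hGw k hk)
  · refine Set.disjoint_left.mpr fun i hik hil => ?_
    have hsep := h.four_mul_quarterGap_le_dist hkl
      (abs_sub_lt_of_mem_centeredRange (hG hk) (hG hl))
    have hik' : dist (k • θ) (z i) ≤ w i + quarterGap q := hik
    have hil' : dist (l • θ) (z i) ≤ w i + quarterGap q := hil
    linarith [dist_triangle_right (k • θ) (l • θ) (z i), hGw k hk i hik]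

end Obstacles

/-! ### Selecting a resonance -/

/-- The radius `exp (-δ |k|)` within which a point has to approach `k • θ` for its resonance
strength to reach `δ` along `k`. -/
noncomputable def arcRadius (δ : ℝ) (k : ℤ) : ℝ := Real.exp (-(δ * |(k : ℝ)|))

lemma arcRadius_pos (δ : ℝ) (k : ℤ) : 0 < arcRadius δ k := Real.exp_pos _

lemma arcRadius_add (δ δ' : ℝ) (k : ℤ) :
    arcRadius (δ + δ') k = arcRadius δ k * arcRadius δ' k := by
  rw [arcRadius, arcRadius, arcRadius, ← Real.exp_add, add_mul, neg_add]

lemma arcRadius_le_arcRadius {δ δ' : ℝ} {k l : ℤ} (hδ : δ ≤ δ') (hδ' : 0 ≤ δ') (h : |k| ≤ |l|) :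
    arcRadius δ' l ≤ arcRadius δ k := by
  have hkl : |(k : ℝ)| ≤ |(l : ℝ)| := by exact_mod_cast h
  exact Real.exp_le_exp.mpr (neg_le_neg (mul_le_mul hδ hkl (abs_nonneg _) hδ'))

lemma summable_arcRadius {η : ℝ} (hη : 0 < η) : Summable (arcRadius η) := by
  have h : Summable fun n : ℕ => Real.exp (n * -η) :=
    Real.summable_exp_nat_mul_iff.mpr (neg_lt_zero.mpr hη)
  refine Summable.of_nat_of_neg (h.congr fun n => ?_) (h.congr fun n => ?_) <;>
    simp [arcRadius, mul_comm]

lemma sqrt_arcRadius (η : ℝ) (k : ℤ) : √(arcRadius η k) = arcRadius (η / 2) k := by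
  rw [arcRadius, arcRadius, ← Real.exp_half]
  ring_nf

/-- The `k` with `q / 16 * ρ ≤ |k| ≤ q / 2` for which `k • θ` lies deep in `closedBall c ρ` and is,
at scale `quarterGap q`, only obstructed by short arcs `closedBall (z i) (w i)` and
`closedBall (j • θ) (R j)`. -/
noncomputable def candidates {ι : Type*} (θ : UnitAddCircle) (z : ι → UnitAddCircle) (w : ι → ℝ)
    (R : ℤ → ℝ) (c : UnitAddCircle) (ρ : ℝ) (q : ℕ) : Finset ℤ :=
  (centeredRange q).filter fun k => q / 16 * ρ ≤ |(k : ℝ)| ∧ dist (k • θ) c ≤ ρ / 2 ∧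
    Unblocked z w (quarterGap q) (k • θ) ∧ Unblocked (fun j => j • θ) R (quarterGap q) (k • θ)

section Selection

variable {ι : Type*} {z : ι → UnitAddCircle} {w f : ι → ℝ} {R : ℤ → ℝ} {θ c c' : UnitAddCircle}
  {r ρ δ : ℝ}

lemma card_filter_abs_lt_le (S : Finset ℤ) {x : ℝ} (hx : 0 ≤ x) :
    ((S.filter fun k : ℤ => |(k : ℝ)| < x).card : ℝ) ≤ 2 * x + 1 := by
  have hsub : (S.filter fun k : ℤ => |(k : ℝ)| < x) ⊆ Finset.Icc (-⌊x⌋) ⌊x⌋ := by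
    intro k hk
    rw [Finset.mem_Icc, ← abs_le, Int.le_floor, Int.cast_abs]
    exact (Finset.mem_filter.mp hk).2.le
  have hcard : (((Finset.Icc (-⌊x⌋) ⌊x⌋).card : ℤ) : ℝ) = 2 * ⌊x⌋ + 1 := by
    rw [Int.card_Icc_of_le]
    · push_cast
      ring
    · linarith [Int.floor_nonneg.mpr hx]
  have hle : ((S.filter fun k : ℤ => |(k : ℝ)| < x).card : ℝ) ≤ (Finset.Icc (-⌊x⌋) ⌊x⌋).card :=
    Nat.cast_le.mpr (Finset.card_le_card hsub)
  push_cast at hcard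
  linarith [Int.floor_le x]

lemma unblocked_of_unblocked_meeting (hr : dist c' c + r ≤ ρ)
    (h : Unblocked (fun i : meeting z w c ρ => z i) (fun i => w i) r c') : Unblocked z w r c' :=
  fun i hi => h ⟨i, meeting_subset_meeting hr hi⟩ hi

lemma eventually_le_card_candidates (hw : ∀ i, 0 ≤ w i) (hws : Summable fun i => √(w i))
    (hR : ∀ j, 0 ≤ R j) (hRs : Summable fun j => √(R j)) (hρ0 : 0 < ρ) (hρ1 : ρ ≤ 1 / 2)
    (hwρ : ∑' i : meeting z w c ρ, w i ≤ ρ / 16) (hRρ : ∑' j, R j ≤ ρ / 16) :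
    ∀ᶠ q : ℕ in atTop, IsApproxDen θ q →
      q / 4 * ρ ≤ (candidates θ z w R c ρ q).card := by
  filter_upwards [eventually_card_not_unblocked_le (fun i : meeting z w c ρ => z i) θ
      (fun i => hw i) (hws.subtype _)
      (show 2 * ∑' i : meeting z w c ρ, w i < 3 * ρ / 16 by linarith),
    eventually_card_not_unblocked_le (fun j : ℤ => j • θ) θ hR hRs
      (show 2 * ∑' j, R j < 3 * ρ / 16 by linarith),
    tendsto_quarterGap.eventually_le_const (half_pos hρ0),
    tendsto_natCast_atTop_atTop.eventually_ge_atTop (12 / ρ)] with q hwq hRq hτ hq h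
  set τ := quarterGap q
  have hnear := h.le_card_dist_le c (show ρ / 2 ≤ 1 / 2 by linarith)
  have hsmall := card_filter_abs_lt_le (centeredRange q) (x := q / 16 * ρ) (by positivity)
  have hsub : ((centeredRange q).filter fun k => dist (k • θ) c ≤ ρ / 2) ⊆
      candidates θ z w R c ρ q ∪ ((centeredRange q).filter fun k : ℤ => |(k : ℝ)| < q / 16 * ρ) ∪
      ((centeredRange q).filter fun k =>
        ¬ Unblocked (fun i : meeting z w c ρ => z i) (fun i => w i) τ (k • θ)) ∪
      ((centeredRange q).filter fun k => ¬ Unblocked (fun j : ℤ => j • θ) R τ (k • θ)) := by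
    intro k hk
    rw [Finset.mem_filter] at hk
    have hkw := unblocked_of_unblocked_meeting (z := z) (w := w) (c := c) (ρ := ρ)
      (show dist (k • θ) c + τ ≤ ρ by linarith)
    simp only [candidates, Finset.mem_union, Finset.mem_filter, ← not_le]
    tauto
  have hcard := (Finset.card_le_card hsub).trans <| (Finset.card_union_le _ _).trans <|
    add_le_add_left ((Finset.card_union_le _ _).trans <|
      add_le_add_left (Finset.card_union_le _ _) _) _
  rify at hcard
  rw [div_le_iff₀ hρ0] at hq
  linarith [hwq h, hRq h]

lemma eventually_exp_neg_mul_natCast_le_quarterGap (hr : 0 < r) :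
    ∀ᶠ q : ℕ in atTop, Real.exp (-(r * q)) ≤ quarterGap q := by
  have h := (tendsto_rpow_mul_exp_neg_mul_atTop_nhds_zero 2 r hr).comp tendsto_natCast_atTop_atTop
  filter_upwards [h.eventually_le_const (show (0 : ℝ) < 1 / 4 by norm_num),
    eventually_gt_atTop 0] with q hq hq0
  rw [Function.comp_apply, Real.rpow_two] at hq
  rw [quarterGap, le_div_iff₀ (by positivity), ← neg_mul]
  linarith

lemma add_lt_dist_zsmul_of_unblocked {q : ℕ} (h : IsApproxDen θ q) (hr : r ≤ quarterGap q) {k : ℤ}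
    (hk : k ∈ centeredRange q)
    (hkR : Unblocked (fun j => j • θ) R (quarterGap q) (k • θ)) {j : ℤ} (hj : |j| < |k|) :
    R j + r < dist (k • θ) (j • θ) := by
  by_contra! hle
  have hRj := hkR j (show dist (k • θ) (j • θ) ≤ R j + quarterGap q by linarith)
  have hkj : |k - j| < q := by
    have := two_mul_abs_le_of_mem_centeredRange hk
    have : 2 * |k| ≤ q := mod_cast this
    exact (abs_sub _ _).trans_lt (by linarith)
  linarith [h.four_mul_quarterGap_le_dist (k := k) (l := j) (fun hkj => hj.ne (by rw [hkj])) hkj,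
    quarterGap_pos h.1]

lemma IsApproxDen.exists_mem_candidates_tsum_le {q : ℕ} (h : IsApproxDen θ q) (hf : Summable f)
    (hf0 : ∀ i, 0 ≤ f i) (hρ : 0 < ρ) (hδ : 0 < δ)
    (hcard : q / 4 * ρ ≤ (candidates θ z w R c ρ q).card)
    (hshort : ∑' i : {i | w i < quarterGap q}, f i ≤ ρ / (4 * δ)) :
    ∃ k ∈ candidates θ z w R c ρ q,
      ∑' i : meeting z w (k • θ) (quarterGap q), f i ≤ 1 / (δ * q) := by
  have : (0 : ℝ) < q := mod_cast h.1
  have hpos : 0 < ((candidates θ z w R c ρ q).card : ℝ) := lt_of_lt_of_le (by positivity) hcard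
  refine Finset.exists_le_of_sum_le (Finset.card_pos.mp (mod_cast hpos)) ?_
  calc _ ≤ ∑' i : {i | w i < quarterGap q}, f i :=
        h.sum_tsum_meeting_le hf hf0 (Finset.filter_subset _ _)
          fun k hk => (Finset.mem_filter.mp hk).2.2.2.1
    _ ≤ ρ / (4 * δ) := hshort
    _ = (q / 4 * ρ) * (1 / (δ * q)) := by field_simp
    _ ≤ ∑ k ∈ candidates θ z w R c ρ q, 1 / (δ * q) := by
        rw [Finset.sum_const, nsmul_eq_mul]
        gcongr

lemma exists_resonance (hθ : ∃ᶠ q in atTop, IsApproxDen θ q) (hw : ∀ i, 0 ≤ w i)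
    (hws : Summable fun i => √(w i)) (hR : ∀ j, 0 ≤ R j) (hRs : Summable fun j => √(R j))
    (hf : Summable f) (hf0 : ∀ i, 0 ≤ f i) (hwf : ∀ i, w i = 0 → f i = 0)
    (hρ0 : 0 < ρ) (hρ1 : ρ ≤ 1 / 2) (hwρ : ∑' i : meeting z w c ρ, w i ≤ ρ / 16)
    (hRρ : ∑' j, R j ≤ ρ / 16) (hδ : 0 < δ) (N : ℝ) :
    ∃ k : ℤ, N ≤ |(k : ℝ)| ∧
      dist (k • θ) c ≤ ρ / 2 ∧ arcRadius δ k ≤ ρ / 2 ∧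
      (∀ j, |j| < |k| → R j + arcRadius δ k < dist (k • θ) (j • θ)) ∧
      ∑' i : meeting z w (k • θ) (arcRadius δ k), f i ≤ 1 / (2 * δ * |(k : ℝ)|) := by
  obtain ⟨q, h, hcard, hτρ, hexp, hshort, hN⟩ := (hθ.and_eventually
    ((eventually_le_card_candidates hw hws hR hRs hρ0 hρ1 hwρ hRρ).and <|
      (tendsto_quarterGap.eventually_le_const (half_pos hρ0)).and <|
      (eventually_exp_neg_mul_natCast_le_quarterGap (show 0 < δ * ρ / 16 by positivity)).and <|
      (((tendsto_tsum_lt_nhds_zero hw hf hwf).comp tendsto_quarterGap).eventually_le_const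
        (show 0 < ρ / (4 * δ) by positivity)).and <|
      tendsto_natCast_atTop_atTop.eventually_ge_atTop ((|N| + 1) * (16 / ρ)))).exists
  set τ := quarterGap q
  obtain ⟨k, hk, hkf⟩ := h.exists_mem_candidates_tsum_le hf hf0 hρ0 hδ (hcard h) hshort
  obtain ⟨hkq, hkρ, hkc, -, hkR⟩ := Finset.mem_filter.mp hk
  have hNk : |N| + 1 ≤ |(k : ℝ)| := by
    refine le_trans ?_ hkρ
    calc |N| + 1 = (|N| + 1) * (16 / ρ) / 16 * ρ := by field_simp
      _ ≤ q / 16 * ρ := by gcongr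
  have hr : arcRadius δ k ≤ τ := by
    refine le_trans (Real.exp_le_exp.mpr (neg_le_neg ?_)) hexp
    calc δ * ρ / 16 * q = δ * (q / 16 * ρ) := by ring
      _ ≤ δ * |(k : ℝ)| := by gcongr
  refine ⟨k, by linarith [le_abs_self N], hkc, hr.trans hτρ,
    fun j hj => add_lt_dist_zsmul_of_unblocked h hr hkq hkR hj, ?_⟩
  calc _ ≤ ∑' i : meeting z w (k • θ) τ, f i :=
        tsum_subtype_mono hf hf0 (meeting_subset_meeting (by rwa [dist_self, zero_add]))
    _ ≤ 1 / (δ * q) := hkf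
    _ ≤ 1 / (2 * δ * |(k : ℝ)|) := by
        have : 0 < |(k : ℝ)| := by linarith [abs_nonneg N]
        refine one_div_le_one_div_of_le (by positivity) ?_
        linarith [mul_le_mul_of_nonneg_left (two_mul_abs_le_of_mem_centeredRange hkq) hδ.le]

end Selection

/-! ### The gauge `omegaS 1` -/

section Gauge

lemma omegaS_zero (s : ℝ) : omegaS s 0 = 0 := if_neg (lt_irrefl _)

lemma omegaS_one_of_pos {r : ℝ} (hr : 0 < r) : omegaS 1 r = 1 / -Real.log r := by
  rw [omegaS, if_pos hr, Real.rpow_neg_one, one_div]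

lemma omegaS_nonneg {s r : ℝ} (hr : r ≤ 1) : 0 ≤ omegaS s r := by
  unfold omegaS
  split_ifs with h
  · exact Real.rpow_nonneg (neg_nonneg.mpr (Real.log_nonpos h.le hr)) _
  · exact le_rfl

lemma omegaS_one_le_omegaS {s r : ℝ} (hs : s ≤ 1) (hr : r ≤ Real.exp (-1)) :
    omegaS 1 r ≤ omegaS s r := by
  unfold omegaS
  split_ifs with h
  · have := (Real.log_le_iff_le_exp h).mpr hr
    exact Real.rpow_le_rpow_of_exponent_le (by linarith) (neg_le_neg hs)
  · exact le_rfl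

lemma sqrt_le_omegaS_one {r : ℝ} (hr0 : 0 ≤ r) (hr1 : r < 1) : √r ≤ omegaS 1 r := by
  rcases hr0.eq_or_lt with rfl | hr
  · rw [Real.sqrt_zero, omegaS_zero]
  rw [omegaS_one_of_pos hr, le_div_iff₀ (neg_pos.mpr (Real.log_neg hr hr1))]
  set u := √√r
  have hu : 0 < u := Real.sqrt_pos.mpr (Real.sqrt_pos.mpr hr)
  have hur : √r = u ^ 2 := (Real.sq_sqrt (Real.sqrt_nonneg r)).symm
  have hlog : Real.log r = 4 * Real.log u := by
    rw [← Real.sq_sqrt hr.le, hur, ← pow_mul, Real.log_pow]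
    norm_num
  calc √r * -Real.log r = 4 * u ^ 2 * -Real.log u := by rw [hur, hlog]; ring
    _ ≤ 4 * u ^ 2 * (u⁻¹ - 1) := by gcongr; linarith [Real.one_sub_inv_le_log_of_pos hu]
    _ = 1 - (2 * u - 1) ^ 2 := by field_simp; ring
    _ ≤ 1 := sub_le_self _ (sq_nonneg _)

lemma le_exp_neg_of_omegaS_one_le {r t : ℝ} (hr : r < 1) (ht : 0 < t) (h : omegaS 1 r ≤ 1 / t) :
    r ≤ Real.exp (-t) := by
  rcases le_or_gt r 0 with hr0 | hr0
  · exact hr0.trans (Real.exp_pos _).le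
  · rw [omegaS_one_of_pos hr0, one_div_le_one_div (neg_pos.mpr (Real.log_neg hr0 hr)) ht] at h
    rw [← Real.log_le_iff_le_exp hr0]
    linarith

variable {ι : Type*} {w : ι → ℝ} {t : ℝ}

lemma summable_sqrt_of_summable_omegaS_one (hw0 : ∀ i, 0 ≤ w i) (hw1 : ∀ i, w i < 1)
    (hω : Summable fun i => omegaS 1 (w i)) : Summable fun i => √(w i) :=
  hω.of_nonneg_of_le (fun _ => Real.sqrt_nonneg _) fun i => sqrt_le_omegaS_one (hw0 i) (hw1 i)

lemma le_exp_neg_sq_of_tsum_omegaS_one_le (hw1 : ∀ i, w i < 1)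
    (hω : Summable fun i => omegaS 1 (w i)) (ht : 0 < t)
    (h : ∑' i, omegaS 1 (w i) ≤ 1 / (2 * t)) (i : ι) : w i ≤ Real.exp (-t) ^ 2 := by
  rw [← Real.exp_nat_mul]
  refine (le_exp_neg_of_omegaS_one_le (hw1 i) (mul_pos two_pos ht) ?_).trans_eq (by ring_nf)
  exact (hω.le_tsum i fun j _ => omegaS_nonneg (hw1 j).le).trans h

lemma tsum_le_of_tsum_omegaS_one_le (hw0 : ∀ i, 0 ≤ w i) (hw1 : ∀ i, w i < 1)
    (hω : Summable fun i => omegaS 1 (w i)) (ht : 0 < t)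
    (h : ∑' i, omegaS 1 (w i) ≤ 1 / (2 * t)) : ∑' i, w i ≤ Real.exp (-t) / (2 * t) := by
  have hwω (i : ι) : w i ≤ Real.exp (-t) * omegaS 1 (w i) := by
    have hsqrt : √(w i) ≤ Real.exp (-t) := Real.sqrt_le_iff.mpr
      ⟨(Real.exp_pos _).le, le_exp_neg_sq_of_tsum_omegaS_one_le hw1 hω ht h i⟩
    calc w i = √(w i) * √(w i) := (Real.mul_self_sqrt (hw0 i)).symm
      _ ≤ Real.exp (-t) * omegaS 1 (w i) := by
          gcongr
          exact sqrt_le_omegaS_one (hw0 i) (hw1 i)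
  have hsum := hω.mul_left (Real.exp (-t))
  calc ∑' i, w i ≤ ∑' i, Real.exp (-t) * omegaS 1 (w i) :=
        (hsum.of_nonneg_of_le hw0 hwω).tsum_le_tsum hwω hsum
    _ = Real.exp (-t) * ∑' i, omegaS 1 (w i) := tsum_mul_left
    _ ≤ Real.exp (-t) * (1 / (2 * t)) := by gcongr
    _ = Real.exp (-t) / (2 * t) := mul_one_div _ _

end Gauge

/-! ### Nested resonant arcs -/

/-- The arc of radius `arcRadius δ k` around `k • θ` can be refined further: it carries obstacles of
small total radius, and so do the guards `arcRadius δ k * arcRadius η k * arcRadius η j` that later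
keep points of the arc away from `j • θ`. -/
structure IsNode {ι : Type*} (θ : UnitAddCircle) (z : ι → UnitAddCircle) (w : ι → ℝ) (δ η : ℝ)
    (k : ℤ) : Prop where
  arcRadius_le : arcRadius δ k ≤ 1 / 2
  tsum_meeting_le : ∑' i : meeting z w (k • θ) (arcRadius δ k), w i ≤ arcRadius δ k / 16
  tsum_guard_le : arcRadius η k * ∑' j, arcRadius η j ≤ 1 / 16

/-- The arc of radius `arcRadius δ k` around `k • θ` refines `closedBall c ρ`: it lies inside it,
keeps a distance more than `R j` from the earlier `j • θ`, and meets only tiny obstacles. -/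
structure Refines {ι : Type*} (θ : UnitAddCircle) (z : ι → UnitAddCircle) (w : ι → ℝ) (R : ℤ → ℝ)
    (c : UnitAddCircle) (ρ δ : ℝ) (k : ℤ) : Prop where
  closedBall_subset : Metric.closedBall (k • θ) (arcRadius δ k) ⊆ Metric.closedBall c ρ
  lt_dist : ∀ x ∈ Metric.closedBall (k • θ) (arcRadius δ k), ∀ j, |j| < |k| → R j < dist x (j • θ)
  le_sq : ∀ i ∈ meeting z w (k • θ) (arcRadius δ k), w i ≤ arcRadius δ k ^ 2

section Nested

variable {ι : Type*} {z : ι → UnitAddCircle} {w : ι → ℝ} {R : ℤ → ℝ} {θ c : UnitAddCircle}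
  {ρ δ η : ℝ} {k : ℤ}

lemma summable_sqrt_guard (hη : 0 < η) : Summable fun j => √(arcRadius δ k * arcRadius η k *
    arcRadius η j) := by
  simp_rw [Real.sqrt_mul (mul_pos (arcRadius_pos _ _) (arcRadius_pos _ _)).le, sqrt_arcRadius η]
  exact (summable_arcRadius (half_pos hη)).mul_left _

lemma exists_isNode_refines (hθ : ∃ᶠ q in atTop, IsApproxDen θ q) (hw0 : ∀ i, 0 ≤ w i)
    (hw1 : ∀ i, w i < 1) (hω : Summable fun i => omegaS 1 (w i)) (hR : ∀ j, 0 ≤ R j)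
    (hRs : Summable fun j => √(R j)) (hρ0 : 0 < ρ) (hρ1 : ρ ≤ 1 / 2)
    (hwρ : ∑' i : meeting z w c ρ, w i ≤ ρ / 16) (hRρ : ∑' j, R j ≤ ρ / 16) (hδ : 0 < δ)
    (hη : 0 < η) (N : ℝ) :
    ∃ k : ℤ, N ≤ |(k : ℝ)| ∧ IsNode θ z w δ η k ∧ Refines θ z w R c ρ δ k := by
  have hguard : Tendsto (fun x => Real.exp (-(η * x)) * ∑' j, arcRadius η j) atTop (𝓝 0) := by
    rw [← zero_mul (∑' j, arcRadius η j)]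
    exact (Real.tendsto_exp_neg_atTop_nhds_zero.comp
      (tendsto_id.const_mul_atTop hη)).mul_const _
  obtain ⟨L, hL⟩ := eventually_atTop.mp <| (eventually_ge_atTop N).and <|
    (eventually_ge_atTop (8 / δ)).and <|
    hguard.eventually_le_const (show (0 : ℝ) < 1 / 16 by norm_num)
  obtain ⟨k, hkL, hkc, hkρ, hkR, hkω⟩ := exists_resonance hθ hw0
    (summable_sqrt_of_summable_omegaS_one hw0 hw1 hω) hR hRs hω
    (fun i => omegaS_nonneg (hw1 i).le) (fun i hi => by rw [hi, omegaS_zero]) hρ0 hρ1 hwρ hRρ hδ L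
  obtain ⟨hN, hδk, hηk⟩ := hL _ hkL
  rw [div_le_iff₀' hδ] at hδk
  set M := meeting z w (k • θ) (arcRadius δ k)
  have hδk0 : 0 < δ * |(k : ℝ)| := by linarith
  rw [mul_assoc] at hkω
  refine ⟨k, hN, ⟨by linarith, ?_, hηk⟩, ⟨?_, fun x hx j hj => ?_, fun i hi => ?_⟩⟩
  · refine (tsum_le_of_tsum_omegaS_one_le (fun i : M => hw0 i) (fun i => hw1 i) (hω.subtype M)
      hδk0 hkω).trans ?_
    exact div_le_div_of_nonneg_left (arcRadius_pos δ k).le (by norm_num) (by linarith)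
  · exact Metric.closedBall_subset_closedBall' (by linarith)
  · have := hkR j hj
    rw [Metric.mem_closedBall] at hx
    linarith [dist_triangle_left (k • θ) (j • θ) x]
  · exact le_exp_neg_sq_of_tsum_omegaS_one_le (fun i : M => hw1 i) (hω.subtype M) hδk0 hkω ⟨i, hi⟩

lemma IsNode.exists_refines (hk : IsNode θ z w δ η k) (hθ : ∃ᶠ q in atTop, IsApproxDen θ q)
    (hw0 : ∀ i, 0 ≤ w i) (hw1 : ∀ i, w i < 1) (hω : Summable fun i => omegaS 1 (w i))
    (hη : 0 < η) {δ' η' : ℝ} (hδ' : 0 < δ') (hη' : 0 < η') :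
    ∃ k' : ℤ, |k| < |k'| ∧ IsNode θ z w δ' η' k' ∧
      Refines θ z w (fun j => arcRadius δ k * arcRadius η k * arcRadius η j) (k • θ)
        (arcRadius δ k) δ' k' := by
  have hguard : ∑' j, arcRadius δ k * arcRadius η k * arcRadius η j ≤ arcRadius δ k / 16 := by
    rw [tsum_mul_left, mul_assoc, div_eq_mul_one_div]
    exact mul_le_mul_of_nonneg_left hk.tsum_guard_le (arcRadius_pos δ k).le
  obtain ⟨k', hN, hk', href⟩ := exists_isNode_refines hθ hw0 hw1 hω
    (fun j => (mul_pos (mul_pos (arcRadius_pos δ k) (arcRadius_pos η k)) (arcRadius_pos η j)).le)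
    (summable_sqrt_guard hη) (arcRadius_pos δ k) hk.arcRadius_le hk.tsum_meeting_le hguard hδ' hη'
    (|k| + 1)
  exact ⟨k', by exact_mod_cast (lt_add_one _).trans_le hN, hk', href⟩

lemma exists_isNode (z : ι → UnitAddCircle) (hθ : ∃ᶠ q in atTop, IsApproxDen θ q)
    (hw0 : ∀ i, 0 ≤ w i) (hw1 : ∀ i, w i < 1) (hω : Summable fun i => omegaS 1 (w i))
    (hw : ∑' i, w i ≤ 1 / 32) (hδ : 0 < δ) (hη : 0 < η) : ∃ k, IsNode θ z w δ η k := by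
  have hws := summable_of_summable_sqrt hw0 (summable_sqrt_of_summable_omegaS_one hw0 hw1 hω)
  have hload : ∑' i : meeting z w 0 (1 / 2), w i ≤ 1 / 2 / 16 :=
    (Summable.tsum_subtype_le w _ hw0 hws).trans (by linarith)
  obtain ⟨k, -, hk, -⟩ := exists_isNode_refines hθ hw0 hw1 hω (R := fun _ => 0) (fun _ => le_rfl)
    (by simp) one_half_pos le_rfl hload (by rw [tsum_zero]; positivity) hδ hη 0
  exact ⟨k, hk⟩

lemma exists_seq_of_forall_exists_succ {β : Type*} {P : ℕ → β → Prop} {r : ℕ → β → β → Prop}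
    (h0 : ∃ b, P 0 b) (hstep : ∀ n b, P n b → ∃ b', P (n + 1) b' ∧ r n b b') :
    ∃ u : ℕ → β, ∀ n, P n (u n) ∧ r n (u n) (u (n + 1)) := by
  obtain ⟨b₀, hb₀⟩ := h0
  choose g hgP hgr using hstep
  let v : ∀ n, {b // P n b} := fun n =>
    Nat.rec ⟨b₀, hb₀⟩ (fun n b => ⟨g n b b.2, hgP n b b.2⟩) n
  exact ⟨fun n => (v n).1, fun n => ⟨(v n).2, hgr n (v n).1 (v n).2⟩⟩

lemma tendsto_cofinite_of_strictMono_abs {k : ℕ → ℤ} (hk : StrictMono fun n => |k n|) :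
    Tendsto k atTop cofinite := by
  rw [← Nat.cofinite_eq_atTop]
  exact (hk.injective.of_comp (f := abs)).tendsto_cofinite

lemma tendsto_abs_intCast_cofinite : Tendsto (fun k : ℤ => |(k : ℝ)|) cofinite atTop :=
  tendsto_norm_cocompact_atTop.comp Int.tendsto_coe_cofinite

lemma tendsto_abs_of_strictMono_abs {k : ℕ → ℤ} (hk : StrictMono fun n => |k n|) :
    Tendsto (fun n => |k n|) atTop atTop := by
  rw [← tendsto_intCast_atTop_iff (R := ℝ)]
  simpa only [Int.cast_abs, Function.comp_def] using
    tendsto_abs_intCast_cofinite.comp (tendsto_cofinite_of_strictMono_abs hk)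

lemma tendsto_arcRadius {d : ℝ} (hd : 0 < d) {δ : ℕ → ℝ} (hδ : ∀ n, d ≤ δ n) {k : ℕ → ℤ}
    (hk : StrictMono fun n => |k n|) : Tendsto (fun n => arcRadius (δ n) (k n)) atTop (𝓝 0) := by
  have hcast := tendsto_abs_intCast_cofinite.comp (tendsto_cofinite_of_strictMono_abs hk)
  refine Real.tendsto_exp_neg_atTop_nhds_zero.comp
    (tendsto_atTop_mono (fun n => ?_) (hcast.const_mul_atTop hd))
  exact mul_le_mul_of_nonneg_right (hδ n) (abs_nonneg _)

lemma exists_resonant_point {d : ℝ} (hd : 0 < d) {δ η : ℕ → ℝ} (hδ : ∀ n, d ≤ δ n)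
    (hη : ∀ n, 0 < η n) (hθ : ∃ᶠ q in atTop, IsApproxDen θ q) (hw0 : ∀ i, 0 ≤ w i)
    (hw1 : ∀ i, w i < 1) (hω : Summable fun i => omegaS 1 (w i)) (hw : ∑' i, w i ≤ 1 / 32) :
    ∃ (x : UnitAddCircle) (k : ℕ → ℤ), (StrictMono fun n => |k n|) ∧
      (∀ n, dist x (k n • θ) ≤ arcRadius (δ n) (k n)) ∧
      (∀ n j, |j| < |k (n + 1)| →
        arcRadius (δ n) (k n) * arcRadius (η n) (k n) * arcRadius (η n) j < dist x (j • θ)) ∧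
      ∀ i, w i ≤ dist x (z i) := by
  have hδ0 (n : ℕ) : 0 < δ n := hd.trans_le (hδ n)
  obtain ⟨k, hk⟩ := exists_seq_of_forall_exists_succ
    (P := fun n k => IsNode θ z w (δ n) (η n) k)
    (exists_isNode z hθ hw0 hw1 hω hw (hδ0 0) (hη 0)) fun n k hk =>
      have ⟨k', hlt, hk', href⟩ := hk.exists_refines hθ hw0 hw1 hω (hη n) (hδ0 (n + 1))
        (hη (n + 1))
      ⟨k', hk', And.intro hlt href⟩
  have href (n : ℕ) := (hk n).2.2
  have hmono : StrictMono fun n => |k n| := strictMono_nat_of_lt_succ fun n => (hk n).2.1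
  obtain ⟨x, hx⟩ := IsCompact.nonempty_iInter_of_sequence_nonempty_isCompact_isClosed
    (fun n => Metric.closedBall (k n • θ) (arcRadius (δ n) (k n)))
    (fun n => (href n).closedBall_subset)
    (fun n => Metric.nonempty_closedBall.mpr (arcRadius_pos _ _).le)
    (isCompact_closedBall _ _) fun n => Metric.isClosed_closedBall
  rw [mem_iInter] at hx
  refine ⟨x, k, hmono, hx, fun n => (href n).lt_dist x (hx (n + 1)), fun i => ?_⟩
  by_contra! hi
  have hle (n : ℕ) : w i ≤ arcRadius (δ (n + 1)) (k (n + 1)) ^ 2 := by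
    refine (href n).le_sq i ?_
    have := hx (n + 1)
    rw [Metric.mem_closedBall] at this
    change dist _ _ ≤ _
    linarith [dist_triangle_left (k (n + 1) • θ) (z i) x]
  have hlim := ((tendsto_arcRadius hd hδ hmono).comp (tendsto_add_atTop_nat 1)).pow 2
  rw [zero_pow two_ne_zero] at hlim
  exact (ge_of_tendsto' hlim hle).not_gt (dist_nonneg.trans_lt hi)

end Nested

/-! ### Resonance strength -/

section ResonanceStrength

lemma exists_eq_mul_add_iff {α x : ℝ} : (∃ k m : ℤ, x = k * α + m) ↔
    ∃ k : ℤ, (x : UnitAddCircle) = k • (α : UnitAddCircle) := by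
  refine exists_congr fun k => ?_
  rw [← sub_eq_zero, ← AddCircle.coe_zsmul, ← AddCircle.coe_sub, AddCircle.coe_eq_zero_iff]
  refine exists_congr fun m => ?_
  rw [zsmul_eq_mul, zsmul_eq_mul, mul_one, eq_sub_iff_add_eq', eq_comm]

lemma le_neg_log_div_abs_iff {d C : ℝ} (hd : 0 < d) {k : ℤ} (hk : k ≠ 0) :
    C ≤ -Real.log d / |(k : ℝ)| ↔ d ≤ arcRadius C k := by
  rw [le_div_iff₀ (abs_pos.mpr (Int.cast_ne_zero.mpr hk)), arcRadius, ← Real.log_le_iff_le_exp hd,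
    le_neg]

lemma neg_log_div_abs_le_iff {d C : ℝ} (hd : 0 < d) {k : ℤ} (hk : k ≠ 0) :
    -Real.log d / |(k : ℝ)| ≤ C ↔ arcRadius C k ≤ d := by
  rw [div_le_iff₀ (abs_pos.mpr (Int.cast_ne_zero.mpr hk)), arcRadius, ← Real.le_log_iff_exp_le hd,
    neg_le]

lemma ofReal_le_resStrength {α x C : ℝ} (h : ∃ᶠ k : ℤ in cofinite,
    dist (x : UnitAddCircle) (k • (α : UnitAddCircle)) ≤ arcRadius C k) :
    ENNReal.ofReal C ≤ resStrength α x := by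
  unfold resStrength
  split_ifs with hx
  · exact le_top
  rw [exists_eq_mul_add_iff, not_exists] at hx
  refine le_limsup_of_frequently_le ((h.and_eventually (eventually_cofinite_ne 0)).mono ?_)
  rintro k ⟨hk, hk0⟩
  rw [distZ_sub_mul_eq_dist]
  exact ENNReal.ofReal_le_ofReal ((le_neg_log_div_abs_iff (dist_pos.mpr (hx k)) hk0).mpr hk)

lemma resStrength_le_ofReal {α x C : ℝ}
    (hx : ∀ k : ℤ, (x : UnitAddCircle) ≠ k • (α : UnitAddCircle))
    (h : ∀ᶠ k : ℤ in cofinite, arcRadius C k ≤ dist (x : UnitAddCircle) (k • (α : UnitAddCircle))) :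
    resStrength α x ≤ ENNReal.ofReal C := by
  rw [resStrength, exists_eq_mul_add_iff, if_neg (not_exists.mpr hx)]
  refine limsup_le_of_le (h := (h.and (eventually_cofinite_ne 0)).mono ?_)
  rintro k ⟨hk, hk0⟩
  rw [distZ_sub_mul_eq_dist]
  exact ENNReal.ofReal_le_ofReal ((neg_log_div_abs_le_iff (dist_pos.mpr (hx k)) hk0).mpr hk)

variable {θ x : UnitAddCircle} {k : ℕ → ℤ} {δ : ℝ} {η : ℕ → ℝ}

lemma exists_mem_Ico_abs_of_strictMono_abs (hk : StrictMono fun n => |k n|) {N : ℕ} {j : ℤ}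
    (hj : |k N| ≤ |j|) : ∃ n ≥ N, |j| ∈ Ico |k n| |k (n + 1)| := by
  rw [← mem_Ici, ← biUnion_Ici_Ico_map_succ (f := fun n => |k n|) (fun n hn => hk.monotone hn)
    fun hbdd => ((Ici_infinite N).image hk.injective.injOn) ?_] at hj
  · obtain ⟨n, hn, hnj⟩ := mem_iUnion₂.mp hj
    exact ⟨n, hn, hnj⟩
  · exact BddBelow.finite_of_bddAbove ⟨0, forall_mem_image.mpr fun n _ => abs_nonneg (k n)⟩ hbdd

lemma eventually_arcRadius_le_dist (hk : StrictMono fun n => |k n|) (hδ : 0 ≤ δ)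
    (hη : Tendsto η atTop (𝓝 0))
    (hx : ∀ n j, |j| < |k (n + 1)| →
      arcRadius δ (k n) * arcRadius (η n) (k n) * arcRadius (η n) j < dist x (j • θ))
    {ε : ℝ} (hε : 0 < ε) : ∀ᶠ j in cofinite, arcRadius (δ + ε) j ≤ dist x (j • θ) := by
  obtain ⟨N, hN⟩ := eventually_atTop.mp (hη.eventually_le_const (half_pos hε))
  have hlarge : ∀ᶠ j : ℤ in cofinite, |k N| ≤ |j| := by
    filter_upwards [tendsto_abs_intCast_cofinite.eventually_ge_atTop |(k N : ℝ)|] with j hj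
    exact_mod_cast hj
  filter_upwards [hlarge] with j hj
  obtain ⟨n, hn, hnj, hjn⟩ := exists_mem_Ico_abs_of_strictMono_abs hk hj
  have hηε := hN n hn
  calc arcRadius (δ + ε) j
      = arcRadius δ j * arcRadius (ε / 2) j * arcRadius (ε / 2) j := by
        rw [← arcRadius_add, ← arcRadius_add, add_assoc, add_halves]
    _ ≤ arcRadius δ (k n) * arcRadius (η n) (k n) * arcRadius (η n) j := by
        have hkn := arcRadius_le_arcRadius hηε (half_pos hε).le hnj
        have hjj := arcRadius_le_arcRadius hηε (half_pos hε).le (le_refl |j|)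
        exact mul_le_mul (mul_le_mul (arcRadius_le_arcRadius le_rfl hδ hnj) hkn
          (arcRadius_pos _ _).le (arcRadius_pos _ _).le) hjj (arcRadius_pos _ _).le
          (mul_pos (arcRadius_pos _ _) (arcRadius_pos _ _)).le
    _ ≤ dist x (j • θ) := (hx n j hjn).le

end ResonanceStrength

/-! ### The gauge measure of the resonance level sets -/

section Level

variable {ι : Type*} {z : ι → UnitAddCircle} {w : ι → ℝ} {α : ℝ} {δ : ℝ≥0∞}

lemma frequently_cofinite_dist_le_arcRadius {θ x : UnitAddCircle} {k : ℕ → ℤ} {δ : ℕ → ℝ} {C : ℝ}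
    (hk : StrictMono fun n => |k n|) (hx : ∀ n, dist x (k n • θ) ≤ arcRadius (δ n) (k n))
    (hC0 : 0 ≤ C) (hC : ∀ᶠ n in atTop, C ≤ δ n) :
    ∃ᶠ j in cofinite, dist x (j • θ) ≤ arcRadius C j :=
  (tendsto_cofinite_of_strictMono_abs hk).frequently <| Eventually.frequently <|
    hC.mono fun n hn => (hx n).trans (arcRadius_le_arcRadius hn (hC0.trans hn) le_rfl)

lemma exists_resStrength_eq_top (z : ι → UnitAddCircle) (hα : Irrational α) (hw0 : ∀ i, 0 ≤ w i)
    (hw1 : ∀ i, w i < 1) (hω : Summable fun i => omegaS 1 (w i)) (hw : ∑' i, w i ≤ 1 / 32) :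
    ∃ x ∈ Ico (0 : ℝ) 1, resStrength α x = ⊤ ∧ ∀ i, w i ≤ dist (x : UnitAddCircle) (z i) := by
  obtain ⟨y, k, hk, hnear, -, hfar⟩ := exists_resonant_point (z := z) one_pos
    (δ := fun n => n + 1) (η := fun _ => 1) (fun n => le_add_of_nonneg_left n.cast_nonneg)
    (fun _ => one_pos) (frequently_isApproxDen hα) hw0 hw1 hω hw
  obtain ⟨x, hx, rfl⟩ := AddCircle.eq_coe_Ico y
  refine ⟨x, hx, ENNReal.eq_top_of_forall_nnreal_le fun C => ?_, hfar⟩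
  rw [← ENNReal.ofReal_coe_nnreal]
  refine ofReal_le_resStrength (frequently_cofinite_dist_le_arcRadius hk hnear C.2 ?_)
  filter_upwards [tendsto_natCast_atTop_atTop.eventually_ge_atTop (C : ℝ)] with n hn
  linarith

lemma exists_resStrength_eq_ofReal (z : ι → UnitAddCircle) (hα : Irrational α) {δ : ℝ} (hδ : 0 < δ)
    (hw0 : ∀ i, 0 ≤ w i) (hw1 : ∀ i, w i < 1) (hω : Summable fun i => omegaS 1 (w i))
    (hw : ∑' i, w i ≤ 1 / 32) :
    ∃ x ∈ Ico (0 : ℝ) 1, resStrength α x = ENNReal.ofReal δ ∧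
      ∀ i, w i ≤ dist (x : UnitAddCircle) (z i) := by
  obtain ⟨y, k, hk, hnear, hguard, hfar⟩ := exists_resonant_point (z := z) hδ
    (δ := fun _ => δ) (η := fun n => 1 / (n + 1)) (fun _ => le_rfl)
    (fun _ => Nat.one_div_pos_of_nat) (frequently_isApproxDen hα) hw0 hw1 hω hw
  obtain ⟨x, hx, rfl⟩ := AddCircle.eq_coe_Ico y
  have hne (j : ℤ) : (x : UnitAddCircle) ≠ j • (α : UnitAddCircle) := by
    have hlarge := (tendsto_add_atTop_iff_nat 1).mpr (tendsto_abs_of_strictMono_abs hk)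
    obtain ⟨n, hn⟩ := (hlarge.eventually_gt_atTop |j|).exists
    refine dist_pos.mp (lt_trans ?_ (hguard n j hn))
    exact mul_pos (mul_pos (arcRadius_pos _ _) (arcRadius_pos _ _)) (arcRadius_pos _ _)
  refine ⟨x, hx, le_antisymm ?_ ?_, hfar⟩
  · refine ENNReal.le_of_forall_pos_le_add fun ε hε _ => ?_
    rw [← ENNReal.ofReal_coe_nnreal, ← ENNReal.ofReal_add hδ.le ε.coe_nonneg]
    exact resStrength_le_ofReal hne (eventually_arcRadius_le_dist hk hδ.le
      tendsto_one_div_add_atTop_nhds_zero_nat hguard hε)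
  · exact ofReal_le_resStrength (frequently_cofinite_dist_le_arcRadius hk hnear hδ.le
      (Eventually.of_forall fun _ => le_rfl))

lemma exists_mem_resSet_forall_le_dist (z : ι → UnitAddCircle) (hα : Irrational α) (hδ : 0 < δ)
    (hw0 : ∀ i, 0 ≤ w i) (hw1 : ∀ i, w i < 1) (hω : Summable fun i => omegaS 1 (w i))
    (hw : ∑' i, w i ≤ 1 / 32) :
    ∃ x ∈ resSet α δ, ∀ i, w i ≤ dist (x : UnitAddCircle) (z i) := by
  obtain ⟨x, hx, hxδ, hfar⟩ : ∃ x ∈ Ico (0 : ℝ) 1, resStrength α x = δ ∧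
      ∀ i, w i ≤ dist (x : UnitAddCircle) (z i) := by
    rcases eq_or_ne δ ⊤ with rfl | hδtop
    · exact exists_resStrength_eq_top z hα hw0 hw1 hω hw
    · simpa only [ENNReal.ofReal_toReal hδtop] using exists_resStrength_eq_ofReal z hα
        (ENNReal.toReal_pos hδ.ne' hδtop) hw0 hw1 hω hw
  exact ⟨x, ⟨Ico_subset_Icc_self hx, hxδ⟩, hfar⟩

end Level

lemma gaugeHaus_mono {ω₁ ω₂ : ℝ → ℝ} (h : ∀ᶠ r in 𝓝[≥] 0, ω₁ r ≤ ω₂ r) (S : Set ℝ) :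
    gaugeHaus ω₁ S ≤ gaugeHaus ω₂ S := by
  obtain ⟨ε₀, hε₀, hle⟩ := mem_nhdsGE_iff_exists_Icc_subset.mp h
  refine iSup₂_le fun ε hε => le_iSup₂_of_le (min ε ε₀) (lt_min hε hε₀) ?_
  refine le_iInf₂ fun a b => le_iInf₂ fun hcov hab => ?_
  refine iInf₂_le_of_le a b (iInf₂_le_of_le hcov
    (fun i => ⟨(hab i).1, (hab i).2.trans (min_le_left _ _)⟩) ?_)
  refine ENNReal.tsum_le_tsum fun i => ENNReal.ofReal_le_ofReal (hle ⟨?_, ?_⟩)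
  · exact sub_nonneg.mpr (hab i).1
  · exact (hab i).2.trans (min_le_right _ _)

lemma tsum_le_sqrt_mul_tsum_omegaS_one {ι : Type*} {w : ι → ℝ} {ε : ℝ} (hw0 : ∀ i, 0 ≤ w i)
    (hw1 : ∀ i, w i < 1) (hwε : ∀ i, w i ≤ ε) (hω : Summable fun i => omegaS 1 (w i)) :
    ∑' i, w i ≤ √ε * ∑' i, omegaS 1 (w i) := by
  have hle (i : ι) : w i ≤ √ε * omegaS 1 (w i) := by
    calc w i = √(w i) * √(w i) := (Real.mul_self_sqrt (hw0 i)).symm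
      _ ≤ √ε * omegaS 1 (w i) := by
        gcongr
        exacts [hwε i, sqrt_le_omegaS_one (hw0 i) (hw1 i)]
  rw [← tsum_mul_left]
  exact ((hω.mul_left _).of_nonneg_of_le hw0 hle).tsum_le_tsum hle (hω.mul_left _)

lemma gaugeHaus_eq_top_of_forall_not_subset {ω : ℝ → ℝ} {S : Set ℝ}
    (h : ∀ C : ℝ≥0, ∃ ε > 0, ∀ a b : ℕ → ℝ, (∀ i, a i ≤ b i ∧ b i - a i ≤ ε) →
      ∑' i, ENNReal.ofReal (ω (b i - a i)) ≤ C → ¬ S ⊆ ⋃ i, Ioo (a i) (b i)) :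
    gaugeHaus ω S = ⊤ := by
  refine ENNReal.eq_top_of_forall_nnreal_le fun C => ?_
  obtain ⟨ε, hε, hnot⟩ := h C
  refine le_iSup₂_of_le ε hε (le_iInf₂ fun a b => le_iInf₂ fun hcov hab => ?_)
  by_contra! hlt
  exact hnot a b hab hlt.le hcov

theorem gaugeHaus_omegaS_one_resSet_eq_top {α : ℝ} (hα : Irrational α) {δ : ℝ≥0∞} (hδ : 0 < δ) :
    gaugeHaus (omegaS 1) (resSet α δ) = ⊤ := by
  refine gaugeHaus_eq_top_of_forall_not_subset fun C => ?_
  have hr0 : 0 < 1 / (32 * ((C : ℝ) + 1)) := by positivity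
  have hr1 : 1 / (32 * ((C : ℝ) + 1)) < 1 := by rw [div_lt_one] <;> linarith [C.coe_nonneg]
  refine ⟨_, pow_pos hr0 2, fun a b hab hcost hcov => ?_⟩
  have hw0 (i : ℕ) : 0 ≤ b i - a i := sub_nonneg.mpr (hab i).1
  have hw1 (i : ℕ) : b i - a i < 1 := (hab i).2.trans_lt (pow_lt_one₀ hr0.le hr1 two_ne_zero)
  have hω0 (i : ℕ) : 0 ≤ omegaS 1 (b i - a i) := omegaS_nonneg (hw1 i).le
  have hω : Summable fun i => omegaS 1 (b i - a i) := by
    simpa only [ENNReal.toReal_ofReal (hω0 _)] using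
      ENNReal.summable_toReal (hcost.trans_lt ENNReal.coe_lt_top).ne
  have hωC : ∑' i, omegaS 1 (b i - a i) ≤ C := by
    rwa [← ENNReal.ofReal_tsum_of_nonneg hω0 hω, ENNReal.ofReal_le_coe] at hcost
  have hw : ∑' i, (b i - a i) ≤ 1 / 32 := by
    calc ∑' i, (b i - a i)
        ≤ 1 / (32 * ((C : ℝ) + 1)) * ∑' i, omegaS 1 (b i - a i) := by
          simpa only [Real.sqrt_sq hr0.le] using
            tsum_le_sqrt_mul_tsum_omegaS_one hw0 hw1 (fun i => (hab i).2) hω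
      _ ≤ 1 / (32 * ((C : ℝ) + 1)) * (C + 1) := by gcongr; linarith
      _ = 1 / 32 := by field_simp
  obtain ⟨x, hx, hfar⟩ :=
    exists_mem_resSet_forall_le_dist (fun i => (a i : UnitAddCircle)) hα hδ hw0 hw1 hω hw
  obtain ⟨i, hai, hbi⟩ := mem_iUnion.mp (hcov hx)
  have := (hfar i).trans (dist_coe_le_abs_sub x (a i))
  rw [abs_of_pos (sub_pos.mpr hai)] at this
  linarith

theorem hausdorff_omegaS_resSet_eq_top_general {α : ℝ} (hα : Irrational α) {δ : ℝ≥0∞} (hδ : 0 < δ)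
    {ω : ℝ → ℝ} (hω : ∀ᶠ r in 𝓝[≥] 0, omegaS 1 r ≤ ω r) : gaugeHaus ω (resSet α δ) = ⊤ :=
  top_le_iff.mp <| (gaugeHaus_omegaS_one_resSet_eq_top hα hδ).ge.trans (gaugeHaus_mono hω _)

/-- For irrational `α ∈ [0,1]` and `0 < δ ≤ ∞`, the `ω_s`-Hausdorff measure of `D(δ)`
is infinite for every `0 < s ≤ 1`. -/
theorem hausdorff_omegaS_resSet_eq_top (α : ℝ) (hα : Irrational α)
    (hα01 : α ∈ Set.Icc (0 : ℝ) 1) (δ : ℝ≥0∞) (hδ : 0 < δ)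
    (s : ℝ) (hs0 : 0 < s) (hs1 : s ≤ 1) :
    gaugeHaus (omegaS s) (resSet α δ) = ⊤ :=
  hausdorff_omegaS_resSet_eq_top_general hα hδ <|
    ((eventually_le_nhds (Real.exp_pos (-1))).filter_mono nhdsWithin_le_nhds).mono
      fun _ => omegaS_one_le_omegaS hs1
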